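/- Let b ≥ 2 be an integer base and let A ⊂ [0,1) be a half-open interval. Let r ≥ 1 be the smallest positive integer for which A can be written as A = [h·b^{1−r} + g·b^{−r} − z, h·b^{1−r} + G·b^{−r} + Z) with an integer h ≥ 0, integers 1 ≤ g ≤ G ≤ b−1, and reals z, Z ∈ [0, b^{−r}). Then the volume vector of A × A satisfies: (i) V_i(A × A) = 0 for all i = 0, …, r−2; (ii) b·V_{i+1}(A × A) ≥ V_i(A × A) for all i ≥ r; and (iii) V_{r−1}(A × A) − (b(b−2)/(b−1))·V_r(A × A) ≤ Ṽ_r(A × A). -/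

import Mathlib

open MeasureTheory

/-- `γ_b(x,y)`: the exact number of initial common base-`b` digits of `x, y ∈ [0,1)`,
i.e. the unique `i ≥ 0` with `⌊b^i x⌋ = ⌊b^i y⌋` but `⌊b^{i+1} x⌋ ≠ ⌊b^{i+1} y⌋`
when `x ≠ y`, and `∞` when `x = y`. -/
noncomputable def gammaB (b : ℕ) (x y : ℝ) : ℕ∞ :=
  if x = y then ⊤
  else ((sInf {i : ℕ | ⌊(b : ℝ) ^ i * x⌋ = ⌊(b : ℝ) ^ i * y⌋ ∧
      ⌊(b : ℝ) ^ (i + 1) * x⌋ ≠ ⌊(b : ℝ) ^ (i + 1) * y⌋} : ℕ) : ℕ∞)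

/-- `V_i(A × B)`: the 2-dimensional Lebesgue measure of
`{(x,y) ∈ A × B : x ≠ y, γ_b(x,y) = i}`. -/
noncomputable def Vvec (b : ℕ) (A B : Set ℝ) (i : ℕ) : ℝ :=
  (volume {p : ℝ × ℝ | p.1 ∈ A ∧ p.2 ∈ B ∧ p.1 ≠ p.2 ∧ gammaB b p.1 p.2 = (i : ℕ∞)}).toReal

/-- `A` admits the representation
`A = [h·b^{1−r} + g·b^{−r} − z, h·b^{1−r} + G·b^{−r} + Z)` with an integer `h ≥ 0`,
integers `1 ≤ g ≤ G ≤ b−1`, and reals `z, Z ∈ [0, b^{−r})`. -/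
def IsRep (b : ℕ) (A : Set ℝ) (r : ℕ) : Prop :=
  ∃ (h g G : ℕ) (z Z : ℝ), 1 ≤ g ∧ g ≤ G ∧ G + 1 ≤ b ∧
    0 ≤ z ∧ z < (b : ℝ) ^ (-(r : ℤ)) ∧ 0 ≤ Z ∧ Z < (b : ℝ) ^ (-(r : ℤ)) ∧
    A = Set.Ico ((h : ℝ) * (b : ℝ) ^ (1 - (r : ℤ)) + (g : ℝ) * (b : ℝ) ^ (-(r : ℤ)) - z)
                ((h : ℝ) * (b : ℝ) ^ (1 - (r : ℤ)) + (G : ℝ) * (b : ℝ) ^ (-(r : ℤ)) + Z)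

/-!
Let `M i` be the area of the pairs in `A × A` with equal `⌊b ^ i * ·⌋`. Since equality at level
`i + 1` implies equality at level `i`, `V i = M i - M (i + 1)`, and `∑ V i` over `i ≥ r` telescopes
to `M r`.

A representation of level `r` says that `A = [m - u, m + v)` lies inside one cell of level `r - 1`
and meets a grid point `m` of level `r`. The former gives (i) and `M (r - 1) = (u + v) ^ 2`. The
latter cuts every `M i` with `i ≥ r` at `m` into two one-sided contributions, each of which is the
explicit function `cellArea` of the rescaled length. Both inequalities thus become statements about
`splitArea b t = cellArea t - cellArea (b * t) / b ^ 2`. On `[0, 1)` this function is a maximum of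
affine functions, and the two of slope `0` and `2 * (b - 1) / b` suffice.
-/

section AgreementSet

/-- The pairs of points of `S` that lie in the same cell `[k / B, (k + 1) / B)` of the grid of
step `1 / B`. For `B = b ^ i` these are the pairs with at least `i` common base-`b` digits, as soon
as `S` lies in a unit cell. -/
def agreementSet (B : ℝ) (S : Set ℝ) : Set (ℝ × ℝ) :=
  {P | P.1 ∈ S ∧ P.2 ∈ S ∧ ⌊B * P.1⌋ = ⌊B * P.2⌋}

variable {B : ℝ} {S T : Set ℝ}

theorem agreementSet_subset_prod (B : ℝ) (S : Set ℝ) : agreementSet B S ⊆ S ×ˢ S :=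
  fun _ hP => ⟨hP.1, hP.2.1⟩

theorem measurableSet_agreementSet (B : ℝ) (hS : MeasurableSet S) :
    MeasurableSet (agreementSet B S) := by
  have hfloor : MeasurableSet {P : ℝ × ℝ | ⌊B * P.1⌋ = ⌊B * P.2⌋} :=
    measurableSet_eq_fun (by fun_prop) (by fun_prop)
  exact (measurable_fst hS).inter ((measurable_snd hS).inter hfloor)

theorem volume_agreementSet_ne_top (B : ℝ) (hS : volume S ≠ ⊤) :
    volume (agreementSet B S) ≠ ⊤ := by
  refine measure_ne_top_of_subset (agreementSet_subset_prod B S) ?_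
  rw [Measure.volume_eq_prod, Measure.prod_prod]
  exact ENNReal.mul_ne_top hS hS

theorem volume_agreementSet_of_floor_eq (hS : ∀ x ∈ S, ∀ y ∈ S, ⌊B * x⌋ = ⌊B * y⌋) :
    volume.real (agreementSet B S) = volume.real S ^ 2 := by
  have heq : agreementSet B S = S ×ˢ S :=
    (agreementSet_subset_prod B S).antisymm fun P hP =>
      ⟨hP.1, hP.2, hS _ hP.1 _ hP.2⟩
  rw [heq, Measure.volume_eq_prod, measureReal_prod_prod, sq]

theorem agreementSet_union (h : ∀ x ∈ S, ∀ y ∈ T, ⌊B * x⌋ ≠ ⌊B * y⌋) :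
    agreementSet B (S ∪ T) = agreementSet B S ∪ agreementSet B T := by
  ext ⟨x, y⟩
  constructor
  · rintro ⟨hx | hx, hy | hy, hxy⟩
    · exact Or.inl ⟨hx, hy, hxy⟩
    · exact absurd hxy (h x hx y hy)
    · exact absurd hxy.symm (h y hy x hx)
    · exact Or.inr ⟨hx, hy, hxy⟩
  · rintro (⟨hx, hy, hxy⟩ | ⟨hx, hy, hxy⟩)
    · exact ⟨Or.inl hx, Or.inl hy, hxy⟩
    · exact ⟨Or.inr hx, Or.inr hy, hxy⟩

theorem volume_agreementSet_union (h : ∀ x ∈ S, ∀ y ∈ T, ⌊B * x⌋ ≠ ⌊B * y⌋)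
    (hT : MeasurableSet T) (hS_fin : volume S ≠ ⊤) (hT_fin : volume T ≠ ⊤) :
    volume.real (agreementSet B (S ∪ T)) =
      volume.real (agreementSet B S) + volume.real (agreementSet B T) := by
  rw [agreementSet_union h]
  refine measureReal_union ?_ (measurableSet_agreementSet B hT)
    (volume_agreementSet_ne_top B hS_fin) (volume_agreementSet_ne_top B hT_fin)
  exact Set.disjoint_left.2 fun P hPS hPT => h _ hPS.1 _ hPT.2.1 hPS.2.2

end AgreementSet

section Intervals

variable {B m p q u v : ℝ} {k : ℤ}

theorem volume_agreementSet_Ico_split (hB : 0 < B) (hm : B * m = k) (hp : p ≤ m) (hq : m ≤ q) :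
    volume.real (agreementSet B (Set.Ico p q)) =
      volume.real (agreementSet B (Set.Ico p m)) +
        volume.real (agreementSet B (Set.Ico m q)) := by
  rw [← Set.Ico_union_Ico_eq_Ico hp hq]
  refine volume_agreementSet_union (fun x hx y hy => ne_of_lt ?_) measurableSet_Ico
    measure_Ico_lt_top.ne measure_Ico_lt_top.ne
  calc ⌊B * x⌋ < k := by rw [Int.floor_lt, ← hm]; exact mul_lt_mul_of_pos_left hx.2 hB
    _ ≤ ⌊B * y⌋ := by rw [Int.le_floor, ← hm]; exact mul_le_mul_of_nonneg_left hy.1 hB.le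

theorem volume_agreementSet_Ico_of_cell (hB : 0 < B) (hp : k ≤ B * p) (hq : B * q ≤ k + 1)
    (hpq : p ≤ q) : volume.real (agreementSet B (Set.Ico p q)) = (q - p) ^ 2 := by
  have hfloor : ∀ x ∈ Set.Ico p q, ⌊B * x⌋ = k := fun x hx => Int.floor_eq_iff.2
    ⟨hp.trans (mul_le_mul_of_nonneg_left hx.1 hB.le),
      (mul_lt_mul_of_pos_left hx.2 hB).trans_le hq⟩
  rw [volume_agreementSet_of_floor_eq fun x hx y hy => (hfloor x hx).trans (hfloor y hy).symm,
    Real.volume_real_Ico_of_le hpq]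

theorem volume_agreementSet_Ico_natCast_cells (hB : 0 < B) (hm : B * m = k) (n : ℕ) :
    volume.real (agreementSet B (Set.Ico m (m + n / B))) = n / B ^ 2 := by
  induction n with
  | zero => simp [agreementSet]
  | succ n ih =>
    have hgrid : B * (m + n / B) = (k + n : ℤ) := by push_cast; field_simp; rw [hm]
    have hnext : B * (m + (n + 1 : ℕ) / B) = (k + n : ℤ) + 1 := by
      rw [← hgrid]; push_cast; field_simp; ring
    have hle : m + n / B ≤ m + (n + 1 : ℕ) / B := by gcongr; exact n.le_succ
    rw [volume_agreementSet_Ico_split hB hgrid (le_add_of_nonneg_right (by positivity)) hle, ih,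
      volume_agreementSet_Ico_of_cell hB hgrid.ge hnext.le hle]
    push_cast
    field_simp
    ring

/-- The area of the pairs in `[0, t)²` lying in a common unit cell, for `0 ≤ t`: there are `⌊t⌋`
full cells and a partial one of length `Int.fract t`. -/
noncomputable def cellArea (t : ℝ) : ℝ := ⌊t⌋ + Int.fract t ^ 2

theorem cellArea_add_intCast (t : ℝ) (n : ℤ) : cellArea (t + n) = cellArea t + n := by
  simp only [cellArea, Int.floor_add_intCast, Int.fract_add_intCast]
  push_cast
  ring

theorem cellArea_of_mem_Ico {t : ℝ} (ht : t ∈ Set.Ico (0 : ℝ) 1) : cellArea t = t ^ 2 := by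
  rw [cellArea, Int.floor_eq_zero_iff.2 ht, Int.fract_eq_self.2 ht, Int.cast_zero, zero_add]

theorem eq_natFloor_add_fract_div (hB : 0 < B) (hv : 0 ≤ v) :
    v = ⌊B * v⌋₊ / B + Int.fract (B * v) / B := by
  rw [natCast_floor_eq_intCast_floor (mul_nonneg hB.le hv), ← add_div, Int.floor_add_fract,
    mul_div_cancel_left₀ _ hB.ne']

theorem volume_agreementSet_Ico_right (hB : 0 < B) (hm : B * m = k) (hv : 0 ≤ v) :
    volume.real (agreementSet B (Set.Ico m (m + v))) = cellArea (B * v) / B ^ 2 := by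
  set n := ⌊B * v⌋₊ with hn
  set s := Int.fract (B * v) with hs
  have hs0 : 0 ≤ s / B := div_nonneg (Int.fract_nonneg _) hB.le
  have hs1 : s < 1 := Int.fract_lt_one _
  have hv_eq : m + v = m + n / B + s / B := by
    rw [add_assoc, ← eq_natFloor_add_fract_div hB hv]
  have hgrid : B * (m + n / B) = (k + n : ℤ) := by push_cast; field_simp; rw [hm]
  have hend : B * (m + n / B + s / B) = (k + n : ℤ) + s := by
    rw [mul_add, hgrid, mul_div_cancel₀ _ hB.ne']
  rw [hv_eq, volume_agreementSet_Ico_split hB hgrid (le_add_of_nonneg_right (by positivity))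
      (le_add_of_nonneg_right hs0), volume_agreementSet_Ico_natCast_cells hB hm,
    volume_agreementSet_Ico_of_cell hB hgrid.ge (by linarith) (le_add_of_nonneg_right hs0),
    cellArea, ← natCast_floor_eq_intCast_floor (mul_nonneg hB.le hv), ← hn, ← hs]
  field_simp
  ring

theorem volume_agreementSet_Ico_left (hB : 0 < B) (hm : B * m = k) (hu : 0 ≤ u) :
    volume.real (agreementSet B (Set.Ico (m - u) m)) = cellArea (B * u) / B ^ 2 := by
  set n := ⌊B * u⌋₊ with hn
  set s := Int.fract (B * u) with hs
  have hs0 : 0 ≤ s / B := div_nonneg (Int.fract_nonneg _) hB.le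
  have hs1 : s < 1 := Int.fract_lt_one _
  have hu_eq : m - u = m - n / B - s / B := by
    rw [sub_sub, ← eq_natFloor_add_fract_div hB hu]
  have hgrid : B * (m - n / B) = (k - n : ℤ) := by push_cast; field_simp; rw [hm]
  have hcells := volume_agreementSet_Ico_natCast_cells hB hgrid n
  rw [sub_add_cancel] at hcells
  have hstart : B * (m - n / B - s / B) = (k - n : ℤ) - s := by
    rw [mul_sub, hgrid, mul_div_cancel₀ _ hB.ne']
  have hcell : ((k - n - 1 : ℤ) : ℝ) = (k - n : ℤ) - 1 := by push_cast; ring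
  rw [hu_eq, volume_agreementSet_Ico_split hB hgrid (sub_le_self _ hs0)
      (sub_le_self _ (by positivity)), hcells,
    volume_agreementSet_Ico_of_cell (k := k - n - 1) hB (by linarith) (by linarith)
      (sub_le_self _ hs0),
    cellArea, ← natCast_floor_eq_intCast_floor (mul_nonneg hB.le hu), ← hn, ← hs]
  field_simp
  ring

theorem volume_agreementSet_Ico_of_grid_point (hB : 0 < B) (hm : B * m = k) (hu : 0 ≤ u)
    (hv : 0 ≤ v) :
    volume.real (agreementSet B (Set.Ico (m - u) (m + v))) =
      (cellArea (B * u) + cellArea (B * v)) / B ^ 2 := by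
  rw [volume_agreementSet_Ico_split hB hm (sub_le_self m hu) (le_add_of_nonneg_right hv),
    volume_agreementSet_Ico_left hB hm hu, volume_agreementSet_Ico_right hB hm hv, add_div]

end Intervals

section CommonDigits

variable {b : ℕ} {x y : ℝ} {S : Set ℝ}

theorem floor_pow_mul_eq_of_le (hb : 0 < b) {i j : ℕ} (hij : i ≤ j)
    (h : ⌊(b : ℝ) ^ j * x⌋ = ⌊(b : ℝ) ^ j * y⌋) : ⌊(b : ℝ) ^ i * x⌋ = ⌊(b : ℝ) ^ i * y⌋ := by
  obtain ⟨d, rfl⟩ := Nat.exists_eq_add_of_le hij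
  have truncate (t : ℝ) : ⌊(b : ℝ) ^ i * t⌋ = ⌊(b : ℝ) ^ (i + d) * t⌋ / (b ^ d : ℕ) := by
    rw [← Int.floor_div_natCast, Nat.cast_pow, pow_add, mul_right_comm,
      mul_div_cancel_right₀ _ (by positivity)]
  rw [truncate, truncate, h]

theorem exists_floor_pow_mul_ne (hb : 2 ≤ b) (hxy : x ≠ y) :
    ∃ n : ℕ, ⌊(b : ℝ) ^ n * x⌋ ≠ ⌊(b : ℝ) ^ n * y⌋ := by
  have hdist : 0 < |x - y| := abs_pos.2 (sub_ne_zero.2 hxy)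
  obtain ⟨n, hn⟩ := pow_unbounded_of_one_lt (1 / |x - y|) (Nat.one_lt_cast.2 hb)
  refine ⟨n, fun h => ?_⟩
  have hlt := Int.abs_sub_lt_one_of_floor_eq_floor h
  rw [← mul_sub, abs_mul, abs_of_nonneg (by positivity)] at hlt
  exact lt_asymm hlt ((div_lt_iff₀ hdist).1 hn)

theorem exists_floor_pow_mul_eq_and_succ_ne (hb : 2 ≤ b) (hxy : x ≠ y) (hfloor : ⌊x⌋ = ⌊y⌋) :
    ∃ i : ℕ, ⌊(b : ℝ) ^ i * x⌋ = ⌊(b : ℝ) ^ i * y⌋ ∧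
      ⌊(b : ℝ) ^ (i + 1) * x⌋ ≠ ⌊(b : ℝ) ^ (i + 1) * y⌋ := by
  by_contra! hstep
  obtain ⟨n, hn⟩ := exists_floor_pow_mul_ne hb hxy
  refine hn (Nat.rec ?_ hstep n)
  simpa only [pow_zero, one_mul] using hfloor

theorem ne_and_gammaB_eq_iff (hb : 2 ≤ b) (hfloor : ⌊x⌋ = ⌊y⌋) (i : ℕ) :
    (x ≠ y ∧ gammaB b x y = i) ↔
      (⌊(b : ℝ) ^ i * x⌋ = ⌊(b : ℝ) ^ i * y⌋ ∧
        ⌊(b : ℝ) ^ (i + 1) * x⌋ ≠ ⌊(b : ℝ) ^ (i + 1) * y⌋) := by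
  set D : Set ℕ := {i | ⌊(b : ℝ) ^ i * x⌋ = ⌊(b : ℝ) ^ i * y⌋ ∧
    ⌊(b : ℝ) ^ (i + 1) * x⌋ ≠ ⌊(b : ℝ) ^ (i + 1) * y⌋} with hD
  have hD_subsingleton : D.Subsingleton := fun j hj l hl => by
    by_contra hjl
    rcases Nat.lt_or_gt_of_ne hjl with hlt | hlt
    · exact hj.2 (floor_pow_mul_eq_of_le (by omega) hlt hl.1)
    · exact hl.2 (floor_pow_mul_eq_of_le (by omega) hlt hj.1)
  change _ ↔ i ∈ D
  constructor
  · rintro ⟨hxy, hgamma⟩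
    rw [gammaB, if_neg hxy, Nat.cast_inj, ← hD] at hgamma
    exact hgamma ▸ Nat.sInf_mem (exists_floor_pow_mul_eq_and_succ_ne hb hxy hfloor)
  · intro hi
    have hxy : x ≠ y := fun h => hi.2 (by rw [h])
    rw [gammaB, if_neg hxy, Nat.cast_inj, ← hD]
    exact ⟨hxy, hD_subsingleton (Nat.sInf_mem ⟨i, hi⟩) hi⟩

theorem agreementSet_pow_antitone (hb : 0 < b) (S : Set ℝ) :
    Antitone fun i : ℕ => agreementSet ((b : ℝ) ^ i) S :=
  fun _ _ hij _ hP => ⟨hP.1, hP.2.1, floor_pow_mul_eq_of_le hb hij hP.2.2⟩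

theorem volume_iInter_agreementSet_pow (hb : 2 ≤ b) (S : Set ℝ) :
    volume (⋂ i : ℕ, agreementSet ((b : ℝ) ^ i) S) = 0 := by
  have hdiag : volume (Set.diagonal ℝ) = 0 := by
    rw [Measure.volume_eq_prod, Measure.measure_prod_null measurableSet_diagonal]
    exact .of_forall fun x => by simp [Set.preimage, Set.diagonal]
  refine measure_mono_null (fun P hP => ?_) hdiag
  by_contra hne
  obtain ⟨n, hn⟩ := exists_floor_pow_mul_ne hb hne
  exact hn (Set.mem_iInter.1 hP n).2.2

theorem tendsto_volume_agreementSet_pow (hb : 2 ≤ b) (hS : MeasurableSet S)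
    (hS_fin : volume S ≠ ⊤) :
    Filter.Tendsto (fun i : ℕ => volume.real (agreementSet ((b : ℝ) ^ i) S)) Filter.atTop
      (nhds 0) := by
  have hlim := tendsto_measure_iInter_atTop
    (fun i => (measurableSet_agreementSet ((b : ℝ) ^ i) hS).nullMeasurableSet)
    (agreementSet_pow_antitone (by omega) S) ⟨0, volume_agreementSet_ne_top _ hS_fin⟩
  rw [volume_iInter_agreementSet_pow hb] at hlim
  exact (ENNReal.tendsto_toReal_zero_iff fun i => volume_agreementSet_ne_top _ hS_fin).2 hlim

theorem Vvec_eq_sub (hb : 2 ≤ b) (hS : MeasurableSet S) (hS_fin : volume S ≠ ⊤)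
    (hfloor : ∀ x ∈ S, ∀ y ∈ S, ⌊x⌋ = ⌊y⌋) (i : ℕ) :
    Vvec b S S i =
      volume.real (agreementSet ((b : ℝ) ^ i) S) -
        volume.real (agreementSet ((b : ℝ) ^ (i + 1)) S) := by
  have hsdiff : {P : ℝ × ℝ | P.1 ∈ S ∧ P.2 ∈ S ∧ P.1 ≠ P.2 ∧ gammaB b P.1 P.2 = i} =
      agreementSet ((b : ℝ) ^ i) S \ agreementSet ((b : ℝ) ^ (i + 1)) S := by
    ext P
    constructor
    · rintro ⟨hx, hy, hgamma⟩
      rw [ne_and_gammaB_eq_iff hb (hfloor _ hx _ hy)] at hgamma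
      exact ⟨⟨hx, hy, hgamma.1⟩, fun h => hgamma.2 h.2.2⟩
    · rintro ⟨⟨hx, hy, heq⟩, hne⟩
      exact ⟨hx, hy, (ne_and_gammaB_eq_iff hb (hfloor _ hx _ hy) i).2
        ⟨heq, fun h => hne ⟨hx, hy, h⟩⟩⟩
  rw [Vvec, hsdiff]
  exact measureReal_sdiff (agreementSet_pow_antitone (by omega) S i.le_succ)
    (measurableSet_agreementSet _ hS) (volume_agreementSet_ne_top _ hS_fin)

theorem hasSum_Vvec (hb : 2 ≤ b) (hS : MeasurableSet S) (hS_fin : volume S ≠ ⊤)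
    (hfloor : ∀ x ∈ S, ∀ y ∈ S, ⌊x⌋ = ⌊y⌋) (r : ℕ) :
    HasSum (fun i => Vvec b S S (r + i)) (volume.real (agreementSet ((b : ℝ) ^ r) S)) := by
  have hnonneg : ∀ i, 0 ≤ Vvec b S S (r + i) := fun _ => ENNReal.toReal_nonneg
  rw [hasSum_iff_tendsto_nat_of_nonneg hnonneg]
  simp only [Vvec_eq_sub hb hS hS_fin hfloor, add_assoc]
  simp only [Finset.sum_range_sub' fun i => volume.real (agreementSet ((b : ℝ) ^ (r + i)) S)]
  have hlim := (tendsto_volume_agreementSet_pow hb hS hS_fin).comp (Filter.tendsto_add_atTop_nat r)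
  simpa [Function.comp_def, add_comm] using hlim.const_sub _

theorem Vvec_eq_zero_of_floor_pow_mul_eq (hb : 2 ≤ b) {i j : ℕ} (hij : i < j)
    (hfloor : ∀ x ∈ S, ∀ y ∈ S, ⌊(b : ℝ) ^ j * x⌋ = ⌊(b : ℝ) ^ j * y⌋) : Vvec b S S i = 0 := by
  have hempty : {P : ℝ × ℝ | P.1 ∈ S ∧ P.2 ∈ S ∧ P.1 ≠ P.2 ∧ gammaB b P.1 P.2 = i} = ∅ := by
    refine Set.eq_empty_of_forall_notMem fun P ⟨hx, hy, hgamma⟩ => ?_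
    have hxy := hfloor _ hx _ hy
    have hxy0 : ⌊P.1⌋ = ⌊P.2⌋ := by
      simpa only [pow_zero, one_mul] using floor_pow_mul_eq_of_le (by omega) j.zero_le hxy
    exact ((ne_and_gammaB_eq_iff hb hxy0 i).1 hgamma).2
      (floor_pow_mul_eq_of_le (by omega) hij hxy)
  rw [Vvec, hempty, measure_empty, ENNReal.toReal_zero]

end CommonDigits

section SplitArea

variable {b : ℕ}

/-- The area of the pairs in `[0, t)²`, `0 ≤ t`, lying in a common cell of length `1` but not in a
common cell of length `1 / b`. -/
noncomputable def splitArea (b : ℕ) (t : ℝ) : ℝ := cellArea t - cellArea (b * t) / (b : ℝ) ^ 2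

theorem splitArea_add_intCast (hb : 0 < b) (t : ℝ) (n : ℤ) :
    splitArea b (t + n) = splitArea b t + n * (b - 1) / b := by
  have hscale : (b : ℝ) * (t + n) = b * t + (b * n : ℤ) := by push_cast; ring
  rw [splitArea, splitArea, hscale, cellArea_add_intCast, cellArea_add_intCast]
  push_cast
  field_simp
  ring

theorem sq_mul_splitArea (hb : 0 < b) {t : ℝ} (ht : t ∈ Set.Ico (0 : ℝ) 1) :
    (b : ℝ) ^ 2 * splitArea b t = ⌊b * t⌋ * (⌊b * t⌋ - 1 + 2 * Int.fract (b * t)) := by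
  have hsq : (b : ℝ) ^ 2 * t ^ 2 = (⌊b * t⌋ + Int.fract (b * t)) ^ 2 := by
    rw [Int.floor_add_fract, mul_pow]
  rw [splitArea, cellArea_of_mem_Ico ht, mul_sub, mul_div_cancel₀ _ (by positivity), hsq, cellArea]
  ring

theorem intCast_mul_sub_one_add_nonneg (d : ℤ) {v : ℝ} (hv : v ∈ Set.Icc (0 : ℝ) 1) :
    (0 : ℝ) ≤ d * (d - 1 + 2 * v) := by
  rcases lt_trichotomy d 0 with hd | rfl | hd
  · have : (d : ℝ) ≤ -1 := by exact_mod_cast Int.le_sub_one_of_lt hd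
    exact mul_nonneg_of_nonpos_of_nonpos (by linarith) (by linarith [hv.2])
  · simp
  · have : (1 : ℝ) ≤ d := by exact_mod_cast hd
    exact mul_nonneg (by linarith) (by linarith [hv.1])

theorem affine_le_sq_mul_splitArea (hb : 0 < b) {t : ℝ} (ht : t ∈ Set.Ico (0 : ℝ) 1) (j : ℤ) :
    j * (2 * b * t - j - 1) ≤ (b : ℝ) ^ 2 * splitArea b t := by
  have hgap := intCast_mul_sub_one_add_nonneg (⌊b * t⌋ - j)
    ⟨Int.fract_nonneg (b * t), (Int.fract_lt_one (b * t)).le⟩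
  push_cast at hgap
  calc j * (2 * b * t - j - 1) = j * (2 * (⌊b * t⌋ + Int.fract (b * t)) - j - 1) := by
        rw [Int.floor_add_fract, mul_assoc 2]
    _ ≤ ⌊b * t⌋ * (⌊b * t⌋ - 1 + 2 * Int.fract (b * t)) := by linarith
    _ = (b : ℝ) ^ 2 * splitArea b t := (sq_mul_splitArea hb ht).symm

theorem sub_one_mul_max_le_mul_splitArea (hb : 0 < b) {t : ℝ} (ht : t ∈ Set.Ico (0 : ℝ) 1) :
    ((b : ℝ) - 1) * max (2 * t - 1) 0 ≤ b * splitArea b t := by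
  have hbR : (0 : ℝ) < b := by positivity
  have hflat := affine_le_sq_mul_splitArea hb ht 0
  have hsteep := affine_le_sq_mul_splitArea hb ht (b - 1)
  push_cast at hflat hsteep
  refine le_of_mul_le_mul_left ?_ hbR
  rcases max_choice (2 * t - 1) 0 with hmax | hmax <;> rw [hmax] <;> linarith

theorem mul_splitArea_le (hb : 0 < b) (t : ℝ) : b * splitArea b t ≤ splitArea b (b * t) := by
  have hbR : (0 : ℝ) < b := by positivity
  wlog ht : t ∈ Set.Ico (0 : ℝ) 1 generalizing t
  · have hfract := this (Int.fract t) ⟨Int.fract_nonneg t, Int.fract_lt_one t⟩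
    have hscale : (b : ℝ) * (Int.fract t + ⌊t⌋) = b * Int.fract t + (b * ⌊t⌋ : ℤ) := by
      push_cast; ring
    rw [← Int.fract_add_floor t, hscale, splitArea_add_intCast hb, splitArea_add_intCast hb]
    push_cast
    calc b * (splitArea b (Int.fract t) + ⌊t⌋ * (b - 1) / b)
        = b * splitArea b (Int.fract t) + b * ⌊t⌋ * (b - 1) / b := by ring
      _ ≤ _ := by gcongr
  set j := ⌊b * t⌋ with hj
  set w := Int.fract (b * t) with hw
  have hw_mem : w ∈ Set.Ico (0 : ℝ) 1 := ⟨Int.fract_nonneg _, Int.fract_lt_one _⟩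
  have hj0 : (0 : ℝ) ≤ j := by
    exact_mod_cast Int.floor_nonneg.2 (mul_nonneg hbR.le ht.1)
  have hjb : (j : ℝ) ≤ b - 1 := by
    have : j < b := Int.floor_lt.2 (by push_cast; exact mul_lt_of_lt_one_right hbR ht.2)
    exact_mod_cast Int.le_sub_one_of_lt this
  have key : j * (2 * w + j - b) ≤ b * splitArea b w :=
    calc j * (2 * w + j - b) ≤ j * max (2 * w - 1) 0 :=
          mul_le_mul_of_nonneg_left (le_max_of_le_left (by linarith)) hj0
      _ ≤ (b - 1) * max (2 * w - 1) 0 := mul_le_mul_of_nonneg_right hjb (le_max_right _ _)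
      _ ≤ b * splitArea b w := sub_one_mul_max_le_mul_splitArea hb hw_mem
  refine le_of_mul_le_mul_left ?_ hbR
  calc b * (b * splitArea b t) = j * (j - 1 + 2 * w) := by rw [← sq_mul_splitArea hb ht]; ring
    _ ≤ b * splitArea b w + j * (b - 1) := by linarith
    _ = b * (splitArea b w + j * (b - 1) / b) := by field_simp
    _ = b * splitArea b (b * t) := by
      rw [← splitArea_add_intCast hb, hw, hj, Int.fract_add_floor]

theorem mul_sub_add_le_splitArea_add_splitArea {z Z : ℝ} (hz : z ∈ Set.Ico (0 : ℝ) 1)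
    (hZ : Z ∈ Set.Ico (0 : ℝ) 1) {n : ℕ} (hn : n + 2 ≤ b) :
    n * (n - b + 2 * (z + Z)) ≤
      (b : ℝ) * (b - 2) / (b - 1) * (splitArea b z + splitArea b Z) := by
  have hbR : (2 : ℝ) ≤ b := by exact_mod_cast (Nat.le_add_left 2 n).trans hn
  have hnb : (n : ℝ) ≤ b - 2 := by
    rw [le_sub_iff_add_le]; exact_mod_cast hn
  have hmax : n - b + 2 * (z + Z) ≤ max (2 * z - 1) 0 + max (2 * Z - 1) 0 := by
    linarith [le_max_left (2 * z - 1) 0, le_max_left (2 * Z - 1) 0]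
  have hb1 : (0 : ℝ) < b - 1 := by linarith
  have hratio : (0 : ℝ) ≤ (b - 2) / (b - 1) := div_nonneg (by linarith) hb1.le
  calc n * (n - b + 2 * (z + Z))
      ≤ n * (max (2 * z - 1) 0 + max (2 * Z - 1) 0) := by gcongr
    _ ≤ (b - 2) * (max (2 * z - 1) 0 + max (2 * Z - 1) 0) := by gcongr
    _ = (b - 2) / (b - 1) * ((b - 1) * max (2 * z - 1) 0 + (b - 1) * max (2 * Z - 1) 0) := by
      field_simp
    _ ≤ (b - 2) / (b - 1) * (b * splitArea b z + b * splitArea b Z) := by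
      exact mul_le_mul_of_nonneg_left
        (add_le_add (sub_one_mul_max_le_mul_splitArea (by omega) hz)
          (sub_one_mul_max_le_mul_splitArea (by omega) hZ)) hratio
    _ = _ := by ring

theorem sq_sub_splitArea_le_two_mul_cellArea {z Z : ℝ} (hz : z ∈ Set.Ico (0 : ℝ) 1)
    (hZ : Z ∈ Set.Ico (0 : ℝ) 1) {n : ℕ} (hn : n + 2 ≤ b) :
    (z + (Z + n)) ^ 2 -
        (b : ℝ) * (b - 2) / (b - 1) * (splitArea b z + splitArea b (Z + n)) ≤
      2 * (cellArea z + cellArea (Z + n)) := by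
  have hbR : (2 : ℝ) ≤ b := by exact_mod_cast (Nat.le_add_left 2 n).trans hn
  have hb0 : (b : ℝ) ≠ 0 := by linarith
  have hb1 : (b : ℝ) - 1 ≠ 0 := by linarith
  have key := mul_sub_add_le_splitArea_add_splitArea hz hZ hn
  have hsplit : (b : ℝ) * (b - 2) / (b - 1) * (splitArea b z + splitArea b (Z + n)) =
      b * (b - 2) / (b - 1) * (splitArea b z + splitArea b Z) + (b - 2) * n := by
    have hadd := splitArea_add_intCast (b := b) (by omega) Z n
    rw [Int.cast_natCast] at hadd
    rw [hadd]
    field_simp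
    ring
  have hcell : cellArea (Z + n) = Z ^ 2 + n := by
    simpa only [Int.cast_natCast, cellArea_of_mem_Ico hZ] using cellArea_add_intCast Z n
  rw [hsplit, hcell, cellArea_of_mem_Ico hz]
  linarith [sq_nonneg (z - Z)]

end SplitArea

section GridPoint

variable {b i : ℕ} {m u v : ℝ} {k : ℤ}

theorem pow_mul_eq_intCast_of_le {j : ℕ} (hm : (b : ℝ) ^ i * m = k) (hij : i ≤ j) :
    (b : ℝ) ^ j * m = ((b : ℤ) ^ (j - i) * k : ℤ) := by
  rw [← Nat.sub_add_cancel hij, pow_add, mul_assoc, hm, Nat.add_sub_cancel]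
  push_cast
  rfl

theorem Vvec_Ico_of_grid_point (hb : 2 ≤ b) (hm : (b : ℝ) ^ i * m = k) (hu : 0 ≤ u) (hv : 0 ≤ v)
    (hfloor : ∀ x ∈ Set.Ico (m - u) (m + v), ∀ y ∈ Set.Ico (m - u) (m + v), ⌊x⌋ = ⌊y⌋) :
    Vvec b (Set.Ico (m - u) (m + v)) (Set.Ico (m - u) (m + v)) i =
      (splitArea b ((b : ℝ) ^ i * u) + splitArea b ((b : ℝ) ^ i * v)) / ((b : ℝ) ^ i) ^ 2 := by
  rw [Vvec_eq_sub hb measurableSet_Ico measure_Ico_lt_top.ne hfloor,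
    volume_agreementSet_Ico_of_grid_point (by positivity) hm hu hv,
    volume_agreementSet_Ico_of_grid_point (by positivity)
      (pow_mul_eq_intCast_of_le (j := i + 1) hm i.le_succ) hu hv,
    pow_succ' (b : ℝ) i, mul_assoc, mul_assoc, splitArea, splitArea]
  field_simp
  ring

theorem Vvec_Ico_le_mul_Vvec_Ico_succ (hb : 2 ≤ b) (hm : (b : ℝ) ^ i * m = k) (hu : 0 ≤ u)
    (hv : 0 ≤ v)
    (hfloor : ∀ x ∈ Set.Ico (m - u) (m + v), ∀ y ∈ Set.Ico (m - u) (m + v), ⌊x⌋ = ⌊y⌋) :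
    Vvec b (Set.Ico (m - u) (m + v)) (Set.Ico (m - u) (m + v)) i ≤
      b * Vvec b (Set.Ico (m - u) (m + v)) (Set.Ico (m - u) (m + v)) (i + 1) := by
  have hb0 : 0 < b := by omega
  rw [Vvec_Ico_of_grid_point hb hm hu hv hfloor,
    Vvec_Ico_of_grid_point hb (pow_mul_eq_intCast_of_le (j := i + 1) hm i.le_succ) hu hv hfloor,
    pow_succ' (b : ℝ) i, mul_assoc, mul_assoc]
  set B : ℝ := (b : ℝ) ^ i
  have hB : 0 < B := by positivity
  calc (splitArea b (B * u) + splitArea b (B * v)) / B ^ 2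
      = (b * splitArea b (B * u) + b * splitArea b (B * v)) / (b * B ^ 2) := by field_simp
    _ ≤ (splitArea b (b * (B * u)) + splitArea b (b * (B * v))) / (b * B ^ 2) := by
      gcongr <;> exact mul_splitArea_le hb0 _
    _ = _ := by field_simp

end GridPoint

namespace IsRep

variable {b r : ℕ} {A : Set ℝ}

theorem two_le_base (hA : IsRep b A r) : 2 ≤ b := by
  obtain ⟨h, g, G, z, Z, hg, hgG, hGb, -⟩ := hA
  omega

theorem measurableSet (hA : IsRep b A r) : MeasurableSet A := by
  obtain ⟨_, _, _, _, _, _, _, _, _, _, _, _, rfl⟩ := hA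
  exact measurableSet_Ico

theorem volume_ne_top (hA : IsRep b A r) : volume A ≠ ⊤ := by
  obtain ⟨_, _, _, _, _, _, _, _, _, _, _, _, rfl⟩ := hA
  exact measure_Ico_lt_top.ne

/-- The representation read in units of `b ^ (-r)`: `A` surrounds the grid point `m`, and the
inequalities on `k` place `A` inside the cell of level `r - 1` with index `h`. -/
theorem exists_eq_Ico_around_grid_point (hA : IsRep b A r) :
    ∃ (m z Z : ℝ) (h k : ℤ) (n : ℕ), z ∈ Set.Ico (0 : ℝ) 1 ∧ Z ∈ Set.Ico (0 : ℝ) 1 ∧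
      (b : ℝ) ^ r * m = k ∧ h * b < k ∧ k + n < h * b + b ∧
      A = Set.Ico (m - z / (b : ℝ) ^ r) (m + (Z + n) / (b : ℝ) ^ r) := by
  have hb := hA.two_le_base
  obtain ⟨h, g, G, z, Z, hg, hgG, hGb, hz0, hz1, hZ0, hZ1, rfl⟩ := hA
  obtain ⟨n, rfl⟩ := Nat.exists_eq_add_of_le hgG
  have hbR : (0 : ℝ) < b := by positivity
  rw [zpow_neg, zpow_natCast] at hz1 hZ1
  rw [zpow_neg, zpow_sub₀ hbR.ne', zpow_natCast, zpow_one]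
  set B : ℝ := (b : ℝ) ^ r
  have hB : 0 < B := by positivity
  have hBz : B * z < 1 := by rwa [← lt_inv_mul_iff₀ hB, mul_one]
  have hBZ : B * Z < 1 := by rwa [← lt_inv_mul_iff₀ hB, mul_one]
  refine ⟨(h * b + g) / B, B * z, B * Z, h, h * b + g, n, ⟨by positivity, hBz⟩,
    ⟨by positivity, hBZ⟩, ?_, by omega, by omega, ?_⟩
  · rw [mul_div_cancel₀ _ hB.ne']
    push_cast
    rfl
  · congr 1
    · field_simp
    · push_cast
      field_simp
      ring

theorem floor_pow_pred_mul_eq (hA : IsRep b A r) (hr : 1 ≤ r) :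
    ∀ x ∈ A, ∀ y ∈ A, ⌊(b : ℝ) ^ (r - 1) * x⌋ = ⌊(b : ℝ) ^ (r - 1) * y⌋ := by
  have hb := hA.two_le_base
  obtain ⟨m, z, Z, h, k, n, hz, hZ, hm, hk_left, hk_right, rfl⟩ :=
    hA.exists_eq_Ico_around_grid_point
  have hbR : (0 : ℝ) < b := by positivity
  have hpow : (b : ℝ) ^ r = b * (b : ℝ) ^ (r - 1) := (mul_pow_sub_one (by omega) _).symm
  have hB : 0 < (b : ℝ) ^ r := by positivity
  have hk_left' : (h * b + 1 : ℝ) ≤ k := by exact_mod_cast hk_left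
  have hk_right' : (k + n + 1 : ℝ) ≤ h * b + b := by exact_mod_cast hk_right
  have hcell : ∀ x ∈ Set.Ico (m - z / (b : ℝ) ^ r) (m + (Z + n) / (b : ℝ) ^ r),
      ⌊(b : ℝ) ^ (r - 1) * x⌋ = h := by
    rintro x ⟨hx_left, hx_right⟩
    have hleft := mul_le_mul_of_nonneg_left hx_left hB.le
    have hright := mul_lt_mul_of_pos_left hx_right hB
    rw [mul_sub, hm, mul_div_cancel₀ _ hB.ne', hpow, mul_assoc] at hleft
    rw [mul_add, hm, mul_div_cancel₀ _ hB.ne', hpow, mul_assoc] at hright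
    refine Int.floor_eq_iff.2 ⟨le_of_mul_le_mul_left ?_ hbR, lt_of_mul_lt_mul_left ?_ hbR.le⟩
    · linarith [hz.2]
    · linarith [hZ.2]
  exact fun x hx y hy => (hcell x hx).trans (hcell y hy).symm

theorem floor_eq_floor (hA : IsRep b A r) (hr : 1 ≤ r) : ∀ x ∈ A, ∀ y ∈ A, ⌊x⌋ = ⌊y⌋ := by
  have hb := hA.two_le_base
  intro x hx y hy
  simpa only [pow_zero, one_mul] using
    floor_pow_mul_eq_of_le (by omega) (r - 1).zero_le (hA.floor_pow_pred_mul_eq hr x hx y hy)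

theorem Vvec_eq_zero (hA : IsRep b A r) {i : ℕ} (hi : i + 2 ≤ r) : Vvec b A A i = 0 :=
  Vvec_eq_zero_of_floor_pow_mul_eq hA.two_le_base (Nat.lt_sub_of_add_lt hi)
    (hA.floor_pow_pred_mul_eq (by omega))

theorem Vvec_le_mul_Vvec_succ (hA : IsRep b A r) (hr : 1 ≤ r) {i : ℕ} (hi : r ≤ i) :
    Vvec b A A i ≤ b * Vvec b A A (i + 1) := by
  have hb := hA.two_le_base
  have hfloor := hA.floor_eq_floor hr
  obtain ⟨m, z, Z, -, k, n, hz, hZ, hm, -, -, rfl⟩ := hA.exists_eq_Ico_around_grid_point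
  have hu : 0 ≤ z / (b : ℝ) ^ r := div_nonneg hz.1 (by positivity)
  have hv : 0 ≤ (Z + n) / (b : ℝ) ^ r := div_nonneg (add_nonneg hZ.1 n.cast_nonneg) (by positivity)
  exact Vvec_Ico_le_mul_Vvec_Ico_succ hb (pow_mul_eq_intCast_of_le hm hi) hu hv hfloor

theorem sq_volume_sub_Vvec_le (hA : IsRep b A r) (hr : 1 ≤ r) :
    volume.real A ^ 2 - (b : ℝ) * (b - 2) / (b - 1) * Vvec b A A r ≤
      2 * volume.real (agreementSet ((b : ℝ) ^ r) A) := by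
  have hb := hA.two_le_base
  have hfloor := hA.floor_eq_floor hr
  obtain ⟨m, z, Z, h, k, n, hz, hZ, hm, hk_left, hk_right, rfl⟩ :=
    hA.exists_eq_Ico_around_grid_point
  set B : ℝ := (b : ℝ) ^ r
  have hB : 0 < B := by positivity
  have hu : 0 ≤ z / B := div_nonneg hz.1 hB.le
  have hv : 0 ≤ (Z + n) / B := div_nonneg (add_nonneg hZ.1 n.cast_nonneg) hB.le
  have hwidth : m + (Z + n) / B - (m - z / B) = (z + (Z + n)) / B := by ring
  rw [Real.volume_real_Ico_of_le (by linarith), hwidth, Vvec_Ico_of_grid_point hb hm hu hv hfloor,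
    volume_agreementSet_Ico_of_grid_point hB hm hu hv, mul_div_cancel₀ _ hB.ne',
    mul_div_cancel₀ _ hB.ne', div_pow, ← mul_div_assoc, ← sub_div, ← mul_div_assoc]
  exact div_le_div_of_nonneg_right
    (sq_sub_splitArea_le_two_mul_cellArea hz hZ (by omega)) (sq_nonneg B)

theorem Vvec_pred_sub_le_tsum (hA : IsRep b A r) (hr : 1 ≤ r) :
    Vvec b A A (r - 1) - (b : ℝ) * (b - 2) / (b - 1) * Vvec b A A r ≤
      ∑' i : ℕ, Vvec b A A (r + i) := by
  have hb := hA.two_le_base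
  have hfloor := hA.floor_eq_floor hr
  have htail := (hasSum_Vvec hb hA.measurableSet hA.volume_ne_top hfloor r).tsum_eq
  have hpred : Vvec b A A (r - 1) =
      volume.real A ^ 2 - volume.real (agreementSet ((b : ℝ) ^ r) A) := by
    rw [Vvec_eq_sub hb hA.measurableSet hA.volume_ne_top hfloor, Nat.sub_add_cancel hr,
      volume_agreementSet_of_floor_eq (hA.floor_pow_pred_mul_eq hr)]
  rw [htail, hpred]
  linarith [hA.sq_volume_sub_Vvec_le hr]

end IsRep

theorem claim_volume_vector_general {b r : ℕ} {A : Set ℝ} (hr : 1 ≤ r) (hrep : IsRep b A r) :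
    (∀ i : ℕ, i + 2 ≤ r → Vvec b A A i = 0) ∧
    (∀ i : ℕ, r ≤ i → Vvec b A A i ≤ (b : ℝ) * Vvec b A A (i + 1)) ∧
    (Vvec b A A (r - 1) - ((b : ℝ) * ((b : ℝ) - 2) / ((b : ℝ) - 1)) * Vvec b A A r ≤
      ∑' i : ℕ, Vvec b A A (r + i)) :=
  ⟨fun _ hi => hrep.Vvec_eq_zero hi, fun _ hi => hrep.Vvec_le_mul_Vvec_succ hr hi,
    hrep.Vvec_pred_sub_le_tsum hr⟩

/-- Properties of the volume vector of `A × A` for a half-open interval `A ⊂ [0,1)`,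
where `r ≥ 1` is the smallest positive integer admitting the representation above:
(i) `V_i(A×A) = 0` for `i = 0,…,r−2`; (ii) `b·V_{i+1}(A×A) ≥ V_i(A×A)` for all `i ≥ r`;
(iii) `V_{r−1}(A×A) − (b(b−2)/(b−1))·V_r(A×A) ≤ Ṽ_r(A×A) = Σ_{i≥r} V_i(A×A)`. -/
theorem claim_volume_vector (b : ℕ) (hb : 2 ≤ b) (A : Set ℝ) (a c : ℝ)
    (hA : A = Set.Ico a c) (hac : a < c) (hsub : A ⊆ Set.Ico (0 : ℝ) 1)
    (hne : A ≠ Set.Ico (0 : ℝ) 1)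
    (r : ℕ) (hr : 1 ≤ r) (hrep : IsRep b A r)
    (hmin : ∀ r', 1 ≤ r' → IsRep b A r' → r ≤ r') :
    (∀ i : ℕ, i + 2 ≤ r → Vvec b A A i = 0) ∧
    (∀ i : ℕ, r ≤ i → Vvec b A A i ≤ (b : ℝ) * Vvec b A A (i + 1)) ∧
    (Vvec b A A (r - 1) - ((b : ℝ) * ((b : ℝ) - 2) / ((b : ℝ) - 1)) * Vvec b A A r ≤
      ∑' i : ℕ, Vvec b A A (r + i)) :=
  claim_volume_vector_general hr hrep
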